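/- Let R be a ring. The following are equivalent: (1) R has a left Artinian left quotient ring Q = C⁻¹R; (2) (a) R̄ is a left Goldie ring, (b) n is a nilpotent ideal, (c) there exists a submonoid C'' of C whose image in R̄ equals C̄, (d) for all c ∈ C'' and m ∈ n there exist elements c₁ ∈ C'' and m₁ ∈ n such that c₁m = m₁c, and (e) R satisfies the ascending chain condition on C''-closed left ideals. Moreover, if these hold then C'' is a left Ore set in R, C''⁻¹R = Q, C''⁻¹n is the prime radical of Q and is nilpotent of nilpotency degree ν, and the map Q/C''⁻¹n → Q̄, c⁻¹r + C''⁻¹n ↦ c̄⁻¹r̄ (where c ∈ C'' with c̄ = c + n), is a ring isomorphism. -/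

import Mathlib

open Function

universe u v

/-- A regular element of a ring: a two-sided non-zero-divisor. -/
def IsRegElem {R : Type*} [Ring R] (c : R) : Prop :=
  (∀ x : R, c * x = 0 → x = 0) ∧ (∀ x : R, x * c = 0 → x = 0)

/-- The set `C` of regular elements of a ring. -/
def regSet (R : Type*) [Ring R] : Set R := {c : R | IsRegElem c}

/-- A (left) ideal is two-sided. -/
def Ideal.IsTwoSidedNC {R : Type*} [Ring R] (I : Ideal R) : Prop :=
  ∀ a ∈ I, ∀ r : R, a * r ∈ I

/-- A prime (two-sided) ideal of a possibly noncommutative ring. -/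
def Ideal.IsPrimeNC {R : Type*} [Ring R] (P : Ideal R) : Prop :=
  P ≠ ⊤ ∧ P.IsTwoSidedNC ∧ ∀ a b : R, (∀ r : R, a * r * b ∈ P) → a ∈ P ∨ b ∈ P

/-- The prime radical `n` of a ring: the intersection of all prime ideals. -/
def primeRadical (R : Type*) [Ring R] : Ideal R := sInf {P : Ideal R | P.IsPrimeNC}

/-- `n` is a nilpotent ideal. -/
def IsNilpotentIdeal {R : Type*} [Ring R] (I : Ideal R) : Prop := ∃ k : ℕ, I ^ (k + 1) = ⊥

/-- `φ : R →+* Q` realizes `Q` as a left quotient ring `C⁻¹R` of `R`:  `R` embeds in `Q`,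
every regular element of `R` becomes invertible in `Q`, and every element of `Q` has the
form `(φ c)⁻¹ * (φ r)` with `c` regular. -/
structure IsLeftQuotRing {R : Type u} {Q : Type v} [Ring R] [Ring Q] (φ : R →+* Q) : Prop where
  inj : Function.Injective φ
  isUnit : ∀ c : R, IsRegElem c → IsUnit (φ c)
  denom : ∀ q : Q, ∃ c r : R, IsRegElem c ∧ φ c * q = φ r

/-- Data of a left quotient ring of `R`. -/
structure LeftQuotData (R : Type u) [Ring R] : Type (u + 1) where
  Q : Type u
  [instQ : Ring Q]
  φ : R →+* Q
  quot : IsLeftQuotRing φ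

attribute [instance] LeftQuotData.instQ

/-- `R` has a left Artinian left quotient ring `Q = C⁻¹R`. -/
def HasArtinianLeftQuot (R : Type u) [Ring R] : Prop :=
  ∃ d : LeftQuotData R, IsArtinianRing d.Q

/-- A subset of a ring is a left annihilator. -/
def IsLeftAnnihilatorSet {R : Type*} [Ring R] (A : Set R) : Prop :=
  ∃ S : Set R, A = {r : R | ∀ s ∈ S, r * s = 0}

/-- The ascending chain condition on left annihilators. -/
def ACCLeftAnnihilators (R : Type*) [Ring R] : Prop :=
  ∀ f : ℕ → Set R, (∀ i, IsLeftAnnihilatorSet (f i)) → (∀ i j, i ≤ j → f i ⊆ f j) →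
    ∃ N, ∀ k, N ≤ k → f k = f N

/-- The module `M` contains no infinite direct sum of nonzero submodules. -/
def NoInfiniteIndepFamily (R : Type*) (M : Type*) [Ring R] [AddCommGroup M] [Module R M] : Prop :=
  ¬ ∃ f : ℕ → Submodule R M, (∀ i, f i ≠ ⊥) ∧ iSupIndep f

/-- A left Goldie ring: ACC on left annihilators and no infinite direct sums of nonzero
left ideals. -/
def IsLeftGoldie (R : Type*) [Ring R] : Prop :=
  ACCLeftAnnihilators R ∧ NoInfiniteIndepFamily R R

/-- The subquotient `n^i/n^{i+1}` of `R` determined by the prime radical `n`. -/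
abbrev grPiece (R : Type*) [Ring R] (i : ℕ) :=
  ↥(primeRadical R ^ i) ⧸
    (Submodule.comap (primeRadical R ^ i : Ideal R).subtype (primeRadical R ^ (i + 1)))

/-- The class of `x ∈ n^i` in `n^i/n^{i+1}`. -/
def grMk {R : Type*} [Ring R] (i : ℕ) (x : R) (hx : x ∈ primeRadical R ^ i) : grPiece R i :=
  Submodule.Quotient.mk ⟨x, hx⟩

/-- The `C̄`-torsion submodule `τ_i` of `n^i/n^{i+1}` (take the span, which coincides with the
set of torsion elements whenever the latter is a submodule, e.g. when `C̄` is a left Ore set);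
here `C̄` is represented through `π : R → R̄` as `{c : R | IsRegElem (π c)}`. -/
def tauSub {R : Type u} {Rbar : Type v} [Ring R] [Ring Rbar] (π : R →+* Rbar) (i : ℕ) :
    Submodule R (grPiece R i) :=
  Submodule.span R {u : grPiece R i | ∃ c : R, IsRegElem (π c) ∧ c • u = 0}

/-- The `C̄`-torsionfree module `f_i = (n^i/n^{i+1})/τ_i`. -/
abbrev fMod {R : Type u} {Rbar : Type v} [Ring R] [Ring Rbar] (π : R →+* Rbar) (i : ℕ) :=
  grPiece R i ⧸ tauSub π i

/-- The class of `x ∈ n^i` in `f_i`. -/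
def fMk {R : Type u} {Rbar : Type v} [Ring R] [Ring Rbar] (π : R →+* Rbar) (i : ℕ) (x : R)
    (hx : x ∈ primeRadical R ^ i) : fMod π i :=
  Submodule.Quotient.mk (grMk i x hx)

/-- The subset `C⁻¹K = {(φ c)⁻¹ (φ a) : c ∈ C, a ∈ K}` of a left quotient ring. -/
def locSet {R : Type u} {Q : Type v} [Ring R] [Ring Q] (φ : R →+* Q) (K : Ideal R) : Set Q :=
  {q : Q | ∃ c a : R, IsRegElem c ∧ a ∈ K ∧ φ c * q = φ a}

/-- A subset of a ring is a left Ore set (multiplicatively closed and satisfying the left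
Ore condition). -/
def IsLeftOreSubset {A : Type*} [Ring A] (S : Set A) : Prop :=
  (1 : A) ∈ S ∧ (∀ s ∈ S, ∀ t ∈ S, s * t ∈ S) ∧
    ∀ s ∈ S, ∀ a : A, ∃ t ∈ S, ∃ b : A, t * a = b * s

/-- A left denominator set. -/
def IsLeftDenominatorSet {A : Type*} [Ring A] (S : Set A) : Prop :=
  IsLeftOreSubset S ∧ ∀ a : A, ∀ s ∈ S, a * s = 0 → ∃ t ∈ S, t * a = 0


/-- A left ideal `J` of `R` is `S`-closed: `c * r ∈ J` with `c ∈ S` implies `r ∈ J`. -/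
def IsSClosedLeftIdeal {R : Type*} [Ring R] (S : Set R) (J : Ideal R) : Prop :=
  ∀ c ∈ S, ∀ r : R, c * r ∈ J → r ∈ J

/-! Let `n` be the prime radical of `R` and let `D` be a submonoid as in (c). The Ore condition
modulo `n` (Goldie's theorem for `R/n`) together with condition (d) on `n` makes `D` a left Ore
set, and the ascending chain condition on `D`-closed left ideals says that `B = D⁻¹R` is left
Noetherian. Primes of a left Noetherian ring of left fractions contract to primes of `R`, so `n`
contracts and extends to the prime radical of `B`, which is nilpotent, and the residue ring is the
left quotient ring of `R/n`, hence semisimple. Thus `B` is semiprimary and left Noetherian, and by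
Hopkins–Levitzki it is left Artinian; in it every regular element of `R` becomes invertible.

Conversely, let `Q = C⁻¹R` be left Artinian. Units lift modulo the nilpotent prime radical of `Q`,
so an element of `R` is regular if and only if it is regular modulo `n`. A regular `c` is
therefore congruent modulo `n` to some `d ∈ D`; condition (d) allows one to push the error `c - d`
into higher and higher powers of `n` by left multiplications, until `x * c ∈ D` for some `x`.
Hence every left fraction can be written with denominator in `D`, i.e. `Q = D⁻¹R`. -/

open scoped nonZeroDivisors

section Essential

variable {R M : Type*} [Ring R] [AddCommGroup M] [Module R M]

/-- `N` is an essential submodule, i.e. it meets every nonzero submodule nontrivially; this is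
tested on cyclic submodules. -/
def IsEssentialSubmodule (N : Submodule R M) : Prop :=
  ∀ y : M, y ≠ 0 → ∃ r : R, r • y ≠ 0 ∧ r • y ∈ N

theorem IsEssentialSubmodule.mono {N N' : Submodule R M} (hN : IsEssentialSubmodule N)
    (h : N ≤ N') : IsEssentialSubmodule N' := fun y hy =>
  let ⟨r, hr, hrN⟩ := hN y hy
  ⟨r, hr, h hrN⟩

theorem IsEssentialSubmodule.colon_singleton {N : Submodule R M} (hN : IsEssentialSubmodule N)
    (x : M) : IsEssentialSubmodule (N.colon {x}) := by
  intro y hy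
  by_cases hyx : y • x = 0
  · exact ⟨1, by simpa using hy, by simp [Submodule.mem_colon_singleton, hyx]⟩
  · obtain ⟨r, hr, hrN⟩ := hN _ hyx
    rw [← smul_assoc] at hr hrN
    exact ⟨r, fun h0 => hr (by rw [h0, zero_smul]), Submodule.mem_colon_singleton.2 hrN⟩

theorem isEssentialSubmodule_of_forall_disjoint {N : Submodule R M}
    (h : ∀ y, Disjoint N (R ∙ y) → y = 0) : IsEssentialSubmodule N := by
  intro y hy
  by_contra! hN
  refine hy (h y (Submodule.disjoint_def.2 fun z hz hz' => ?_))
  obtain ⟨r, rfl⟩ := Submodule.mem_span_singleton.1 hz'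
  exact by_contra fun h0 => hN r h0 hz

theorem exists_disjoint_isEssentialSubmodule_sup (L : Submodule R M) :
    ∃ K : Submodule R M, Disjoint L K ∧ IsEssentialSubmodule (L ⊔ K) := by
  obtain ⟨K, hK⟩ := zorn_le₀ {K : Submodule R M | Disjoint L K} fun S hS hchain =>
    ⟨sSup S, (hchain.directedOn.disjoint_sSup_right).2 fun _ hx => hS hx, fun _ hx => le_sSup hx⟩
  refine ⟨K, hK.prop, isEssentialSubmodule_of_forall_disjoint fun y hy => ?_⟩
  have hyK : R ∙ y ≤ K := le_sup_right.trans <|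
    hK.le_of_ge (hK.prop.disjoint_sup_right_of_disjoint_sup_left hy) le_sup_left
  exact Submodule.span_singleton_eq_bot.1 (hy.eq_bot_of_ge (hyK.trans le_sup_right))

end Essential

section Uniform

variable {R M : Type*} [Ring R] [AddCommGroup M] [Module R M]

theorem iSupIndep_of_disjoint_of_forall_lt_le {f g : ℕ → Submodule R M}
    (hd : ∀ k, Disjoint (f k) (g k)) (hle : ∀ k i, k < i → f i ≤ g k) : iSupIndep f := by
  rw [iSupIndep_iff_finsetSum_eq_zero_imp_eq_zero]
  intro s v hv hsum i
  induction i using Nat.strong_induction_on with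
  | _ i ih =>
    intro hi
    have hg : ∑ j ∈ s.erase i, v j ∈ g i := by
      refine Submodule.sum_mem _ fun j hj => ?_
      obtain ⟨hji, hjs⟩ := Finset.mem_erase.1 hj
      rcases lt_or_gt_of_ne hji with hlt | hgt
      · rw [ih j hlt hjs]
        exact Submodule.zero_mem _
      · exact hle i j hgt (hv j hjs)
    rw [← Finset.add_sum_erase s v hi] at hsum
    refine Submodule.disjoint_def.1 (hd i) _ (hv i hi) ?_
    rw [eq_neg_of_add_eq_zero_left hsum]
    exact Submodule.neg_mem _ hg

theorem NoInfiniteIndepFamily.exists_forall_disjoint_eq_bot (h : NoInfiniteIndepFamily R M)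
    {𝒦 : Set (Submodule R M)} (h𝒦 : 𝒦.Nonempty) :
    ∃ K ∈ 𝒦, ∀ K' ∈ 𝒦, K' ≤ K → ∀ L ≤ K, Disjoint L K' → L = ⊥ := by
  by_contra! hcon
  have step : ∀ K : 𝒦, ∃ K' : 𝒦, K' ≤ K ∧ ∃ L ≤ K.1, Disjoint L K' ∧ L ≠ ⊥ := fun K =>
    let ⟨K', hK', hle, L, hL⟩ := hcon K K.2
    ⟨⟨K', hK'⟩, hle, L, hL⟩
  choose next hnext L hLle hLd hL0 using step
  obtain ⟨K₀, hK₀⟩ := h𝒦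
  let K : ℕ → 𝒦 := fun k => next^[k] ⟨K₀, hK₀⟩
  have hK : ∀ k, K (k + 1) = next (K k) := fun k => Function.iterate_succ_apply' _ _ _
  have hanti : Antitone K := antitone_nat_of_succ_le fun k => (hK k).trans_le (hnext _)
  refine h ⟨fun k => L (K k), fun k => hL0 _, iSupIndep_of_disjoint_of_forall_lt_le
    (g := fun k => K (k + 1)) (fun k => ?_) fun k i hki => (hLle _).trans (hanti hki)⟩
  rw [hK]
  exact hLd _

end Uniform

section Goldie

variable {A : Type*} [Ring A]

/-- The left annihilator of a set, as a left ideal. -/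
abbrev leftAnnihilator (S : Set A) : Ideal A := (⊥ : Ideal A).colon S

theorem mem_leftAnnihilator_singleton {a x : A} : x ∈ leftAnnihilator {a} ↔ x * a = 0 := by
  simp [Submodule.mem_colon_singleton]

theorem isLeftAnnihilatorSet_leftAnnihilator (S : Set A) :
    IsLeftAnnihilatorSet (leftAnnihilator S : Set A) :=
  ⟨S, by ext x; simp [Submodule.mem_colon]⟩

theorem leftAnnihilator_singleton_le_mul (a b : A) :
    leftAnnihilator {a} ≤ leftAnnihilator {a * b} := fun x hx => by
  rw [mem_leftAnnihilator_singleton] at hx ⊢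
  rw [← mul_assoc, hx, zero_mul]

theorem ACCLeftAnnihilators.exists_maximalFor (h : ACCLeftAnnihilators A) {T : Set A}
    (hT : T.Nonempty) : ∃ a, MaximalFor (· ∈ T) (fun a => leftAnnihilator {a}) a := by
  have : WellFoundedGT {I : Set A // IsLeftAnnihilatorSet I} := by
    rw [wellFoundedGT_iff_monotone_chain_condition]
    intro f
    obtain ⟨N, hN⟩ := h (fun i => (f i).1) (fun i => (f i).2) fun i j hij => f.monotone hij
    exact ⟨N, fun m hm => Subtype.ext (hN m hm).symm⟩
  exact exists_maximalFor_of_wellFoundedGT (· ∈ T)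
    (fun a => (⟨_, isLeftAnnihilatorSet_leftAnnihilator {a}⟩ :
      {I : Set A // IsLeftAnnihilatorSet I})) hT

theorem ACCLeftAnnihilators.exists_pow (h : ACCLeftAnnihilators A) (a : A) :
    ∃ N, ∀ k, N ≤ k → leftAnnihilator {a ^ k} = leftAnnihilator {a ^ N} := by
  obtain ⟨N, hN⟩ := h (fun i => leftAnnihilator {a ^ i})
    (fun i => isLeftAnnihilatorSet_leftAnnihilator _) fun i j hij => by
      rw [← Nat.add_sub_cancel' hij, pow_add]
      exact leftAnnihilator_singleton_le_mul _ _
  exact ⟨N, fun k hk => SetLike.coe_injective (hN k hk)⟩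

/-- A semiprime ring: `0` is the only element `a` with `aAa = 0`. -/
def IsSemiprimeRing (A : Type*) [Ring A] : Prop := ∀ a : A, (∀ r : A, a * r * a = 0) → a = 0

theorem isNilpotent_mul_mul_of_forall {a : A} (ha : ∀ r : A, IsNilpotent (r * a)) (r x : A) :
    IsNilpotent (r * (a * x)) := by
  obtain ⟨n, hn⟩ := ha (x * r)
  have hpow : ∀ m : ℕ, (r * (a * x)) ^ (m + 1) = r * a * (x * r * a) ^ m * x := by
    intro m
    induction m with
    | zero => simp [mul_assoc]
    | succ m ih => rw [pow_succ, ih, pow_succ]; simp only [mul_assoc]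
  exact ⟨n + 1, by rw [hpow, hn, mul_zero, zero_mul]⟩

/- For an element `a ≠ 0` generating a nil left ideal, with `l(a)` maximal and
`(ax)^k ≠ 0 = (ax)^(k+1)`, maximality gives `l((ax)^k) = l(a)`, so `axa = 0`. -/
theorem IsSemiprimeRing.eq_zero_of_forall_isNilpotent_mul (hs : IsSemiprimeRing A)
    (h : ACCLeftAnnihilators A) {b : A} (hb : ∀ r : A, IsNilpotent (r * b)) : b = 0 := by
  by_contra hb0
  have : Nontrivial A := nontrivial_of_ne b 0 hb0
  obtain ⟨a, ⟨ha0, ha⟩, hmax⟩ :=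
    h.exists_maximalFor (T := {a | a ≠ 0 ∧ ∀ r : A, IsNilpotent (r * a)}) ⟨b, hb0, hb⟩
  refine ha0 (hs a fun x => ?_)
  have hnil : IsNilpotent (a * x) := by simpa using isNilpotent_mul_mul_of_forall ha 1 x
  have hlast : (a * x) * (a * x) ^ (nilpotencyClass (a * x) - 1) = 0 := by
    rw [← pow_succ', Nat.sub_add_cancel (pos_nilpotencyClass_iff.2 hnil),
      pow_nilpotencyClass hnil]
  have hne := pow_pred_nilpotencyClass hnil
  rcases hk : nilpotencyClass (a * x) - 1 with _ | k
  · rw [hk, pow_zero, mul_one] at hlast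
    rw [hlast, zero_mul]
  · rw [hk, pow_succ', mul_assoc a x (_ ^ k)] at hlast hne
    have hle := hmax ⟨hne, fun r => isNilpotent_mul_mul_of_forall ha r _⟩
      (leftAnnihilator_singleton_le_mul _ _)
    exact mem_leftAnnihilator_singleton.1 (hle (mem_leftAnnihilator_singleton.2 hlast))

theorem ACCLeftAnnihilators.isNilpotent_of_isEssentialSubmodule (h : ACCLeftAnnihilators A) {x : A}
    (hx : IsEssentialSubmodule (leftAnnihilator {x})) : IsNilpotent x := by
  obtain ⟨N, hN⟩ := h.exists_pow x
  refine ⟨N, by_contra fun h0 => ?_⟩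
  obtain ⟨r, hr0, hr⟩ := hx _ h0
  have hr' : r ∈ leftAnnihilator {x ^ (N + 1)} := by
    rw [mem_leftAnnihilator_singleton] at hr ⊢
    rw [pow_succ, ← mul_assoc]
    exact hr
  exact hr0 (mem_leftAnnihilator_singleton.1 (hN _ N.le_succ ▸ hr'))

theorem IsSemiprimeRing.eq_zero_of_isEssentialSubmodule (hs : IsSemiprimeRing A)
    (h : ACCLeftAnnihilators A) {z : A} (hz : IsEssentialSubmodule (leftAnnihilator {z})) :
    z = 0 := by
  refine hs.eq_zero_of_forall_isNilpotent_mul h fun r =>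
    h.isNilpotent_of_isEssentialSubmodule ((hz.colon_singleton r).mono fun x hx => ?_)
  rw [Submodule.mem_colon_singleton, smul_eq_mul, mem_leftAnnihilator_singleton] at hx
  rwa [mem_leftAnnihilator_singleton, ← mul_assoc]

theorem NoInfiniteIndepFamily.isEssentialSubmodule_span (h : NoInfiniteIndepFamily A A) {c : A}
    (hc : c ∈ nonZeroDivisorsRight A) : IsEssentialSubmodule (Ideal.span {c}) := by
  refine isEssentialSubmodule_of_forall_disjoint fun y hy => ?_
  obtain ⟨_, ⟨k, rfl⟩, hk⟩ := h.exists_forall_disjoint_eq_bot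
    (Set.range_nonempty fun k : ℕ => Ideal.span {c ^ k})
  have hck : c ^ k ∈ nonZeroDivisorsRight A := pow_mem hc k
  refine hck y (Ideal.span_singleton_eq_bot.1 (hk _ ⟨k + 1, rfl⟩ ?_ (Ideal.span {y * c ^ k}) ?_ ?_))
  · exact Ideal.span_singleton_le_iff_mem _ |>.2
      (Ideal.mem_span_singleton'.2 ⟨c, (pow_succ' c k).symm⟩)
  · exact Ideal.span_singleton_le_iff_mem _ |>.2 (Ideal.mem_span_singleton'.2 ⟨y, rfl⟩)
  · rw [Submodule.disjoint_def]
    intro z hz hz'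
    obtain ⟨a, rfl⟩ := Ideal.mem_span_singleton'.1 hz
    obtain ⟨w, hw⟩ := Ideal.mem_span_singleton'.1 hz'
    have hway : w * c = a * y := by
      refine sub_eq_zero.1 (hck _ ?_)
      rw [sub_mul, mul_assoc, ← pow_succ', hw, mul_assoc, sub_self]
    have hay : a * y = 0 := Submodule.disjoint_def.1 hy _
      (Ideal.mem_span_singleton'.2 ⟨w, hway⟩) (Submodule.mem_span_singleton.2 ⟨a, rfl⟩)
    rw [← mul_assoc, hay, zero_mul]

/-- The condition `l(c²) = l(c)` on left annihilators. -/
def HasStableLeftAnnihilator (c : A) : Prop := ∀ x : A, x * c * c = 0 → x * c = 0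

theorem IsSemiprimeRing.exists_hasStableLeftAnnihilator (hs : IsSemiprimeRing A)
    (h : ACCLeftAnnihilators A) {E : Ideal A} (hE : E ≠ ⊥) :
    ∃ b ∈ E, b ≠ 0 ∧ HasStableLeftAnnihilator b := by
  obtain ⟨e, he, he0⟩ := (Submodule.ne_bot_iff _).1 hE
  obtain ⟨r, hr⟩ : ∃ r : A, ¬ IsNilpotent (r * e) := by
    by_contra! hcon
    exact he0 (hs.eq_zero_of_forall_isNilpotent_mul h hcon)
  obtain ⟨N, hN⟩ := h.exists_pow (r * e)
  refine ⟨(r * e) ^ (N + 1), Ideal.pow_mem_of_mem _ (E.mul_mem_left _ he) _ N.succ_pos,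
    fun h0 => hr ⟨_, h0⟩, fun x hx => ?_⟩
  rw [mul_assoc, ← pow_add, ← mem_leftAnnihilator_singleton, hN _ (by omega)] at hx
  rwa [← mem_leftAnnihilator_singleton, hN _ (by omega)]

namespace HasStableLeftAnnihilator

variable {b c : A}

theorem mul_add_eq_zero_iff (hc : HasStableLeftAnnihilator c) (hbc : b * c = 0) {x : A} :
    x * (c + b) = 0 ↔ x * c = 0 ∧ x * b = 0 := by
  refine ⟨fun h => ?_, fun h => by rw [mul_add, h.1, h.2, add_zero]⟩
  rw [mul_add] at h
  have hxc : x * c = 0 := hc x <| by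
    rw [← zero_mul c, ← h, add_mul, mul_assoc x b, hbc, mul_zero, add_zero]
  exact ⟨hxc, by rwa [hxc, zero_add] at h⟩

theorem add (hc : HasStableLeftAnnihilator c) (hb : HasStableLeftAnnihilator b)
    (hbc : b * c = 0) : HasStableLeftAnnihilator (c + b) := by
  intro x hx
  obtain ⟨hxc, hxb⟩ := (hc.mul_add_eq_zero_iff hbc).1 hx
  have hc0 : x * c = 0 := hc x <| by
    rwa [mul_add, add_mul, mul_assoc x b, hbc, mul_zero, add_zero] at hxc
  rw [mul_add, hc0, zero_add] at hxb ⊢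
  exact hb x hxb

end HasStableLeftAnnihilator

/- If `c ∈ E` is stable and `l(c) ≠ 0`, then a nonzero stable `b ∈ E ∩ l(c)` yields the stable
element `c + b` with `l(c) ⊇ Ab ⊕ l(c + b)`; this cannot be repeated forever. -/
theorem IsEssentialSubmodule.exists_mem_nonZeroDivisorsRight (hs : IsSemiprimeRing A)
    (hA : IsLeftGoldie A) {E : Ideal A} (hE : IsEssentialSubmodule E) :
    ∃ c ∈ E, c ∈ nonZeroDivisorsRight A := by
  obtain ⟨_, ⟨c, ⟨hcE, hc⟩, rfl⟩, hmin⟩ := hA.2.exists_forall_disjoint_eq_bot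
    (𝒦 := (fun c => leftAnnihilator {c}) '' {c | c ∈ E ∧ HasStableLeftAnnihilator c})
    (Set.Nonempty.image _ ⟨0, E.zero_mem, by simp [HasStableLeftAnnihilator]⟩)
  refine ⟨c, hcE, fun x hxc => by_contra fun hx0 => ?_⟩
  have hne : E ⊓ leftAnnihilator {c} ≠ ⊥ := by
    obtain ⟨r, hr0, hrE⟩ := hE x hx0
    refine (Submodule.ne_bot_iff _).2 ⟨r • x, ⟨hrE, Submodule.smul_mem _ r ?_⟩, hr0⟩
    exact mem_leftAnnihilator_singleton.2 hxc
  obtain ⟨b, ⟨hbE, hbc⟩, hb0, hb⟩ := hs.exists_hasStableLeftAnnihilator hA.1 hne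
  have hbc0 : b * c = 0 := mem_leftAnnihilator_singleton.1 hbc
  refine hb0 (Ideal.span_singleton_eq_bot.1 (hmin (leftAnnihilator {c + b})
    ⟨_, ⟨E.add_mem hcE hbE, hc.add hb hbc0⟩, rfl⟩ (fun y hy => ?_) (Ideal.span {b})
    (Ideal.span_singleton_le_iff_mem _ |>.2 hbc) (Submodule.disjoint_def.2 fun y hy hy' => ?_)))
  · rw [mem_leftAnnihilator_singleton, hc.mul_add_eq_zero_iff hbc0] at hy
    exact mem_leftAnnihilator_singleton.2 hy.1
  · obtain ⟨a, rfl⟩ := Ideal.mem_span_singleton'.1 hy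
    rw [mem_leftAnnihilator_singleton, hc.mul_add_eq_zero_iff hbc0] at hy'
    exact hb a hy'.2

theorem IsEssentialSubmodule.exists_mem_nonZeroDivisors (hs : IsSemiprimeRing A)
    (hA : IsLeftGoldie A) {E : Ideal A} (hE : IsEssentialSubmodule E) : ∃ c ∈ E, c ∈ A⁰ := by
  obtain ⟨c, hcE, hc⟩ := hE.exists_mem_nonZeroDivisorsRight hs hA
  refine ⟨c, hcE, fun x hx => ?_, hc⟩
  refine hs.eq_zero_of_isEssentialSubmodule hA.1 ((hA.2.isEssentialSubmodule_span hc).mono ?_)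
  rwa [Ideal.span_singleton_le_iff_mem, mem_leftAnnihilator_singleton]

theorem IsLeftGoldie.exists_mul_eq_mul (hs : IsSemiprimeRing A) (hA : IsLeftGoldie A) (a : A)
    {c : A} (hc : c ∈ A⁰) : ∃ t ∈ A⁰, ∃ b : A, t * a = b * c := by
  obtain ⟨t, ht, htreg⟩ := ((hA.2.isEssentialSubmodule_span hc.2).colon_singleton a
    ).exists_mem_nonZeroDivisors hs hA
  obtain ⟨b, hb⟩ := Ideal.mem_span_singleton'.1 (Submodule.mem_colon_singleton.1 ht)
  exact ⟨t, htreg, b, hb.symm⟩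

end Goldie

section Fractions

/-- `B = D⁻¹A` via `φ`, except that `φ` need not be injective: it inverts `D`, and every element
of `B` has the form `(φ d)⁻¹ * φ a` with `d ∈ D`. -/
structure HasLeftFractions {A B : Type*} [Ring A] [Ring B] (φ : A →+* B) (D : Submonoid A) :
    Prop where
  isUnit : ∀ d ∈ D, IsUnit (φ d)
  denom : ∀ b : B, ∃ d ∈ D, ∃ a : A, φ d * b = φ a

/-- The ascending chain condition on `S`-closed left ideals. -/
def ACCClosedLeftIdeals {A : Type*} [Ring A] (S : Set A) : Prop :=
  ∀ f : ℕ → Ideal A, (∀ i, IsSClosedLeftIdeal S (f i)) → (∀ i j, i ≤ j → f i ≤ f j) →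
    ∃ N, ∀ k, N ≤ k → f k = f N

variable {A B : Type*} [Ring A] [Ring B] {φ : A →+* B} {D : Submonoid A}

theorem accLeftAnnihilators_of_injective (hφ : Injective φ) [IsNoetherianRing B] :
    ACCLeftAnnihilators A := by
  intro f hf hmono
  choose S hS using hf
  let r : ℕ → Set A := fun i => {s | ∀ a ∈ f i, a * s = 0}
  have hr : Antitone r := fun i j hij s hs a ha => hs a (hmono i j hij ha)
  have hfr : ∀ i a, a ∈ f i ↔ φ a ∈ leftAnnihilator (φ '' r i) := by
    intro i a
    simp only [Submodule.mem_colon, Set.forall_mem_image, smul_eq_mul, Submodule.mem_bot,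
      ← map_mul, map_eq_zero_iff φ hφ]
    refine ⟨fun ha s hs => hs a ha, fun H => ?_⟩
    rw [hS]
    exact fun s hs => H fun x hx => by
      rw [hS] at hx
      exact hx s hs
  obtain ⟨N, hN⟩ := monotone_stabilizes_iff_noetherian.2 ‹IsNoetherianRing B›
    ⟨fun i => leftAnnihilator (φ '' r i),
      fun i j hij => Submodule.colon_mono le_rfl (Set.image_mono (hr hij))⟩
  refine ⟨N, fun k hk => Set.ext fun a => ?_⟩
  rw [hfr, hfr, show leftAnnihilator (φ '' r N) = leftAnnihilator (φ '' r k) from hN k hk]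

theorem IsLeftQuotRing.hasLeftFractions (h : IsLeftQuotRing φ) : HasLeftFractions φ A⁰ :=
  ⟨h.isUnit, fun b => let ⟨c, r, hc, e⟩ := h.denom b; ⟨c, hc, r, e⟩⟩

namespace HasLeftFractions

theorem isLeftQuotRing (h : HasLeftFractions φ A⁰) (hφ : Injective φ) : IsLeftQuotRing φ :=
  ⟨hφ, h.isUnit, fun b => let ⟨c, hc, r, e⟩ := h.denom b; ⟨c, r, hc, e⟩⟩

theorem exists_map_mul_eq (h : HasLeftFractions φ D) (a : A) {d : A} (hd : d ∈ D) :
    ∃ d' ∈ D, ∃ a' : A, φ d' * φ a = φ a' * φ d := by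
  obtain ⟨u, hu⟩ := h.isUnit d hd
  obtain ⟨d', hd', a', e⟩ := h.denom (φ a * ↑u⁻¹)
  exact ⟨d', hd', a', by rw [← e, ← hu, mul_assoc, mul_assoc, Units.inv_mul, mul_one]⟩

theorem mem_map_iff (h : HasLeftFractions φ D) {L : Ideal A} {b : B} :
    b ∈ L.map φ ↔ ∃ d ∈ D, ∃ a ∈ L, φ d * b = φ a := by
  refine ⟨fun hb => ?_, ?_⟩
  · induction hb using Submodule.span_induction with
    | mem b hb =>
      obtain ⟨a, ha, rfl⟩ := hb
      exact ⟨1, D.one_mem, a, ha, by simp⟩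
    | zero => exact ⟨1, D.one_mem, 0, L.zero_mem, by simp⟩
    | add b b' _ _ ihb ihb' =>
      obtain ⟨d, hd, a, ha, e⟩ := ihb
      obtain ⟨d', hd', a', ha', e'⟩ := ihb'
      obtain ⟨s, hs, x, hx⟩ := h.exists_map_mul_eq d hd'
      refine ⟨s * d, D.mul_mem hs hd, s * a + x * a',
        L.add_mem (L.mul_mem_left _ ha) (L.mul_mem_left _ ha'), ?_⟩
      rw [mul_add, map_mul, mul_assoc, e, hx, mul_assoc, e', map_add, map_mul, map_mul]
    | smul c b _ ih =>
      obtain ⟨d, hd, a, ha, e⟩ := ih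
      obtain ⟨u, hu⟩ := h.isUnit d hd
      obtain ⟨s, hs, x, hx⟩ := h.denom (c * ↑u⁻¹)
      refine ⟨s, hs, x * a, L.mul_mem_left _ ha, ?_⟩
      rw [map_mul, ← e, ← hx, ← hu, smul_eq_mul, mul_assoc, mul_assoc, Units.inv_mul_cancel_left]
  · rintro ⟨d, hd, a, ha, e⟩
    rw [← Ideal.unit_mul_mem_iff_mem _ (h.isUnit d hd), e]
    exact Ideal.mem_map_of_mem φ ha

theorem map_comap (h : HasLeftFractions φ D) (I : Ideal B) : (I.comap φ).map φ = I := by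
  refine le_antisymm Ideal.map_comap_le fun b hb => h.mem_map_iff.2 ?_
  obtain ⟨d, hd, a, e⟩ := h.denom b
  exact ⟨d, hd, a, by rw [Ideal.mem_comap, ← e]; exact I.mul_mem_left _ hb, e⟩

theorem isSClosedLeftIdeal_comap (h : HasLeftFractions φ D) (I : Ideal B) :
    IsSClosedLeftIdeal (D : Set A) (I.comap φ) := by
  intro d hd a ha
  rwa [Ideal.mem_comap, map_mul, Ideal.unit_mul_mem_iff_mem _ (h.isUnit d hd)] at ha

theorem comap_map_of_isSClosedLeftIdeal (h : HasLeftFractions φ D) (hφ : Injective φ) {L : Ideal A}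
    (hL : IsSClosedLeftIdeal (D : Set A) L) : (L.map φ).comap φ = L := by
  refine le_antisymm (fun x hx => ?_) Ideal.le_comap_map
  obtain ⟨d, hd, a, ha, e⟩ := h.mem_map_iff.1 hx
  exact hL d hd x (by rwa [hφ ((map_mul φ d x).trans e)])

theorem isNoetherianRing_iff (h : HasLeftFractions φ D) (hφ : Injective φ) :
    IsNoetherianRing B ↔ ACCClosedLeftIdeals (D : Set A) := by
  refine ⟨fun hB f hf hmono => ?_, fun hacc => monotone_stabilizes_iff_noetherian.1 fun f => ?_⟩
  · obtain ⟨N, hN⟩ := monotone_stabilizes_iff_noetherian.2 hB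
      ⟨fun i => (f i).map φ, fun i j hij => Ideal.map_mono (hmono i j hij)⟩
    refine ⟨N, fun k hk => ?_⟩
    rw [← h.comap_map_of_isSClosedLeftIdeal hφ (hf k),
      ← h.comap_map_of_isSClosedLeftIdeal hφ (hf N)]
    exact congrArg (Ideal.comap φ) (hN k hk).symm
  · obtain ⟨N, hN⟩ := hacc (fun i => Ideal.comap φ (f i)) (fun i => h.isSClosedLeftIdeal_comap _)
      fun i j hij => Ideal.comap_mono (f.monotone hij)
    refine ⟨N, fun k hk => ?_⟩
    rw [← h.map_comap (f N), ← h.map_comap (f k), hN k hk]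

theorem isUnit_map_of_mem_nonZeroDivisorsRight (h : HasLeftFractions φ D) (hφ : Injective φ)
    [IsArtinianRing B] {a : A} (ha : a ∈ nonZeroDivisorsRight A) : IsUnit (φ a) := by
  refine IsArtinianRing.isUnit_iff_isRightRegular.2 <|
    isRightRegular_iff_mem_nonZeroDivisorsRight.2 fun b hb => ?_
  obtain ⟨d, hd, x, e⟩ := h.denom b
  have hx : x = 0 := ha x (hφ (by rw [map_mul, ← e, mul_assoc, hb, mul_zero, map_zero]))
  rwa [hx, map_zero, (h.isUnit d hd).mul_right_eq_zero] at e

theorem disjoint_map (h : HasLeftFractions φ D) (hφ : Injective φ) {I J : Ideal A}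
    (hIJ : Disjoint I J) : Disjoint (I.map φ) (J.map φ) := by
  rw [Submodule.disjoint_def]
  intro b hbI hbJ
  obtain ⟨d, hd, a, ha, e⟩ := h.mem_map_iff.1 hbI
  obtain ⟨s, hs, x, hx, e'⟩ := h.mem_map_iff.1 ((J.map φ).mul_mem_left (φ d) hbJ)
  have hsa : s * a = x := hφ (by rw [map_mul, ← e, e'])
  have hx0 : x = 0 := Submodule.disjoint_def.1 hIJ x (hsa ▸ I.mul_mem_left s ha) hx
  rwa [hx0, map_zero, (h.isUnit s hs).mul_right_eq_zero, (h.isUnit d hd).mul_right_eq_zero] at e'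

theorem noInfiniteIndepFamily (h : HasLeftFractions φ D) (hφ : Injective φ) [IsNoetherianRing B] :
    NoInfiniteIndepFamily A A := by
  rintro ⟨f, hne, hind⟩
  have hmap : iSupIndep fun i => Ideal.map φ (f i) := fun i => by
    simpa only [Ideal.map_iSup] using h.disjoint_map hφ (hind i)
  have hne' : ∀ i, Ideal.map φ (f i) ≠ ⊥ := fun i hi =>
    hne i <| (Submodule.eq_bot_iff _).2 fun a ha => (map_eq_zero_iff φ hφ).1 <|
      (Submodule.mem_bot B).1 (hi ▸ Ideal.mem_map_of_mem φ ha)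
  refine Set.infinite_univ (α := ℕ) ?_
  simpa [hne'] using Submodule.finite_ne_bot_of_iSupIndep hmap

theorem isLeftGoldie (h : HasLeftFractions φ D) (hφ : Injective φ) [IsNoetherianRing B] :
    IsLeftGoldie A :=
  ⟨accLeftAnnihilators_of_injective hφ, h.noInfiniteIndepFamily hφ⟩

theorem isSemisimpleRing (h : HasLeftFractions φ A⁰) (hφ : Injective φ) (hs : IsSemiprimeRing A)
    (hA : IsLeftGoldie A) : IsSemisimpleRing B := by
  refine (isSemisimpleModule_iff B B).2 ⟨fun L => ?_⟩
  obtain ⟨K, hd, hE⟩ := exists_disjoint_isEssentialSubmodule_sup (Ideal.comap φ L)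
  obtain ⟨c, hcE, hc⟩ := hE.exists_mem_nonZeroDivisors hs hA
  have hdisj := h.disjoint_map hφ hd
  have htop := Ideal.eq_top_of_isUnit_mem _ (Ideal.mem_map_of_mem φ hcE) (h.isUnit c hc)
  rw [Ideal.map_sup, h.map_comap] at htop
  rw [h.map_comap] at hdisj
  exact ⟨Ideal.map φ K, hdisj, codisjoint_iff.2 htop⟩

/- If `d ∈ D` and `x ∈ I`, the chain `{y | y d^k ∈ I}` stabilises at some `N`, and comparing steps
`N` and `N + 1` at `y = x d^{-(N+1)}` gives `x d⁻¹ ∈ I`. -/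
theorem isTwoSided_of_stable (h : HasLeftFractions φ D) [IsNoetherianRing B] {I : Ideal B}
    (hI : ∀ x ∈ I, ∀ a : A, x * φ a ∈ I) : I.IsTwoSided := by
  refine ⟨fun {x} b hx => ?_⟩
  obtain ⟨d, hd, a, e⟩ := h.denom b
  obtain ⟨u, hu⟩ := h.isUnit d hd
  suffices hxu : x * ↑u⁻¹ ∈ I by
    have := hI _ hxu a
    rwa [← e, ← hu, mul_assoc, Units.inv_mul_cancel_left] at this
  have hmono : Monotone fun k : ℕ => I.colon {φ d ^ k} := monotone_nat_of_le_succ fun k y hy => by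
    rw [Submodule.mem_colon_singleton, smul_eq_mul] at hy ⊢
    rw [pow_succ, ← mul_assoc]
    exact hI _ hy d
  obtain ⟨N, hN⟩ := monotone_stabilizes_iff_noetherian.2 ‹IsNoetherianRing B› ⟨_, hmono⟩
  have hmem : x * ↑(u ^ (N + 1))⁻¹ ∈ I.colon {φ d ^ (N + 1)} := by
    rw [Submodule.mem_colon_singleton, smul_eq_mul, mul_assoc, ← hu, ← Units.val_pow_eq_pow_val,
      Units.inv_mul, mul_one]
    exact hx
  have hN' : I.colon {φ d ^ N} = I.colon {φ d ^ (N + 1)} := hN (N + 1) N.le_succ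
  rw [← hN', Submodule.mem_colon_singleton, smul_eq_mul, mul_assoc, ← hu,
    ← Units.val_pow_eq_pow_val, ← Units.val_mul, pow_succ, mul_inv_rev,
    inv_mul_cancel_right] at hmem
  exact hmem

end HasLeftFractions

end Fractions

section PrimeRadical

variable {R : Type*} [Ring R]

theorem mem_primeRadical {a : R} :
    a ∈ primeRadical R ↔ ∀ P : Ideal R, P.IsPrimeNC → a ∈ P := by
  simp [primeRadical, Submodule.mem_sInf]

instance primeRadical_isTwoSided : (primeRadical R).IsTwoSided :=
  ⟨fun {a} b ha => mem_primeRadical.2 fun P hP => hP.2.1 a (mem_primeRadical.1 ha P hP) b⟩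

theorem isSemiprimeRing_of_ker_eq {S : Type*} [Ring S] {π : R →+* S} (hπ : Surjective π)
    (hker : RingHom.ker π = primeRadical R) : IsSemiprimeRing S := by
  intro x hx
  obtain ⟨a, rfl⟩ := hπ x
  have ha : ∀ r, a * r * a ∈ primeRadical R := fun r => by
    rw [← hker, RingHom.mem_ker, map_mul, map_mul]
    exact hx _
  rw [← RingHom.mem_ker, hker]
  exact mem_primeRadical.2 fun P hP =>
    or_self_iff.1 (hP.2.2 a a fun r => mem_primeRadical.1 (ha r) P hP)

theorem le_of_pow_le_of_isPrimeNC {P I : Ideal R} (hP : P.IsPrimeNC) {k : ℕ} (h : I ^ k ≤ P) :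
    I ≤ P := by
  induction k with
  | zero =>
    rw [Submodule.pow_zero, Ideal.one_eq_top, top_le_iff] at h
    exact (hP.1 h).elim
  | succ k ih =>
    by_contra hI
    obtain ⟨a, haI, haP⟩ := SetLike.not_le_iff_exists.1 hI
    refine hI (ih fun b hb => (hP.2.2 b a fun r => ?_).resolve_right haP)
    rw [mul_assoc]
    exact h (Ideal.mul_mem_mul hb (I.mul_mem_left _ haI))

theorem le_primeRadical_of_pow_eq_bot {I : Ideal R} {k : ℕ} (h : I ^ k = ⊥) :
    I ≤ primeRadical R :=
  le_sInf fun _ hP => le_of_pow_le_of_isPrimeNC hP (h ▸ bot_le)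

theorem exists_lt_lt_mul_le_of_not_isPrimeNC {I : Ideal R} [I.IsTwoSided] (htop : I ≠ ⊤)
    (hI : ¬ I.IsPrimeNC) :
    ∃ J K : Ideal R, J.IsTwoSided ∧ K.IsTwoSided ∧ I < J ∧ I < K ∧ J * K ≤ I := by
  obtain ⟨a, b, hab, ha, hb⟩ :
      ∃ a b, (∀ r, a * r * b ∈ I) ∧ a ∉ I ∧ b ∉ I := by
    by_contra! h
    exact hI ⟨htop, fun x hx r => I.mul_mem_right r hx,
      fun a b hab => or_iff_not_imp_left.2 (h a b hab)⟩
  let J : Ideal R := I.colon (Set.range (· * b))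
  let K : Ideal R := I ⊔ Ideal.span {b} * ⊤
  have mem_J : ∀ x, x ∈ J ↔ ∀ r, x * (r * b) ∈ I := fun x => by simp [J, Submodule.mem_colon]
  refine ⟨J, K, ⟨fun {x} s hx => ?_⟩, ⟨fun {x} s hx => ?_⟩, ?_, ?_, ?_⟩
  · rw [mem_J] at hx ⊢
    intro r
    rw [mul_assoc, ← mul_assoc s]
    exact hx _
  · obtain ⟨i, hi, j, hj, rfl⟩ := Submodule.mem_sup.1 hx
    rw [add_mul]
    exact Submodule.add_mem_sup (I.mul_mem_right s hi) (Ideal.mul_mem_right s _ hj)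
  · refine SetLike.lt_iff_le_and_exists.2 ⟨fun x hx => (mem_J x).2 fun r => I.mul_mem_right _ hx,
      a, (mem_J a).2 fun r => mul_assoc a r b ▸ hab r, ha⟩
  · have hbK : b * 1 ∈ K := le_sup_right (a := I)
      (Ideal.mul_mem_mul (Ideal.mem_span_singleton_self b) Submodule.mem_top)
    exact SetLike.lt_iff_le_and_exists.2 ⟨le_sup_left, b, mul_one b ▸ hbK, hb⟩
  · have hJb : J * Ideal.span {b} ≤ I := Ideal.mul_le.2 fun x hx y hy => by
      obtain ⟨r, rfl⟩ := Ideal.mem_span_singleton'.1 hy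
      exact (mem_J x).1 hx r
    rw [Ideal.mul_sup, ← Ideal.mul_assoc]
    exact sup_le Ideal.mul_le_right ((Ideal.mul_mono_left hJb).trans Ideal.mul_le_left)

theorem exists_primeRadical_pow_le [IsNoetherianRing R] {I : Ideal R} (hI : I.IsTwoSided) :
    ∃ k : ℕ, primeRadical R ^ (k + 1) ≤ I := by
  induction I using WellFoundedGT.induction with
  | ind I ih =>
    by_cases htop : I = ⊤
    · exact ⟨0, htop ▸ le_top⟩
    by_cases hprime : I.IsPrimeNC
    · exact ⟨0, (Submodule.pow_one _).le.trans (sInf_le hprime)⟩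
    obtain ⟨J, K, hJ, hK, hIJ, hIK, hJK⟩ := exists_lt_lt_mul_le_of_not_isPrimeNC htop hprime
    obtain ⟨j, hj⟩ := ih J hIJ hJ
    obtain ⟨k, hk⟩ := ih K hIK hK
    refine ⟨j + 1 + k, ?_⟩
    rw [add_assoc, Ideal.IsTwoSided.pow_add]
    exact (Ideal.mul_mono hj hk).trans hJK

theorem isNilpotentIdeal_primeRadical [IsNoetherianRing R] : IsNilpotentIdeal (primeRadical R) :=
  let ⟨k, hk⟩ := exists_primeRadical_pow_le (I := (⊥ : Ideal R)) inferInstance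
  ⟨k, le_bot_iff.1 hk⟩

theorem IsNilpotentIdeal.isNilpotent_of_mem {I : Ideal R} (hI : IsNilpotentIdeal I) {x : R}
    (hx : x ∈ I) : IsNilpotent x := by
  obtain ⟨k, hk⟩ := hI
  exact ⟨k + 1, (Submodule.mem_bot R).1 (hk ▸ Ideal.pow_mem_pow hx (k + 1))⟩

theorem le_jacobson_of_forall_isNilpotent {I : Ideal R} (hI : ∀ x ∈ I, IsNilpotent x) :
    I ≤ Ring.jacobson R := by
  rw [Ring.jacobson_eq_sInf_isMaximal]
  refine le_sInf fun M hM => ?_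
  have hM : M.IsMaximal := hM
  by_contra hIM
  obtain ⟨m, hm, i, hi, hmi⟩ := Submodule.mem_sup.1 <| (Ideal.eq_top_iff_one _).1 <|
    hM.1.2 _ (left_lt_sup.2 hIM)
  have hunit : IsUnit m := eq_sub_of_add_eq hmi ▸ (hI i hi).isUnit_one_sub
  exact hM.ne_top (Ideal.eq_top_of_isUnit_mem M hm hunit)

theorem isUnit_of_isUnit_map {S : Type*} [Ring S] {χ : R →+* S} (hχ : Surjective χ)
    (hker : ∀ x ∈ RingHom.ker χ, IsNilpotent x) {a : R} (ha : IsUnit (χ a)) : IsUnit a := by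
  obtain ⟨u, hu⟩ := ha
  obtain ⟨b, hb⟩ := hχ ↑u⁻¹
  obtain ⟨v, hv⟩ : IsUnit (a * b) := by
    simpa using (hker (1 - a * b) (by simp [hb, ← hu])).isUnit_one_sub
  obtain ⟨w, hw⟩ : IsUnit (b * a) := by
    simpa using (hker (1 - b * a) (by simp [hb, ← hu])).isUnit_one_sub
  refine isUnit_iff_exists_and_exists.2 ⟨⟨b * ↑v⁻¹, ?_⟩, ⟨↑w⁻¹ * b, ?_⟩⟩
  · rw [← mul_assoc, ← hv, Units.mul_inv]
  · rw [mul_assoc, ← hw, Units.inv_mul]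

theorem comap_pow_le {S : Type*} [Ring S] (φ : R →+* S) (I : Ideal S) (k : ℕ) :
    I.comap φ ^ k ≤ (I ^ k).comap φ := by
  induction k with
  | zero => simp [Submodule.pow_zero, Ideal.one_eq_top]
  | succ k ih =>
    refine Ideal.mul_le.2 fun r hr s hs => ?_
    rw [Ideal.mem_comap, map_mul]
    exact Ideal.mul_mem_mul (ih hr) hs

theorem comap_pow_eq_bot {S : Type*} [Ring S] {φ : R →+* S} (hφ : Injective φ) {I : Ideal S} {k : ℕ}
    (hk : I ^ k = ⊥) : I.comap φ ^ k = ⊥ :=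
  le_bot_iff.1 <| (comap_pow_le φ I k).trans (hk ▸ (Ideal.comap_bot_of_injective φ hφ).le)

theorem map_mul_map_le {S : Type*} [Ring S] {φ : R →+* S} {I : Ideal R}
    [hI : (I.map φ).IsTwoSided] (J : Ideal R) : I.map φ * J.map φ ≤ (I * J).map φ := by
  refine Ideal.mul_le.2 fun x hx y hy => ?_
  induction hy using Submodule.span_induction generalizing x with
  | mem y hy =>
    obtain ⟨b, hb, rfl⟩ := hy
    induction hx using Submodule.span_induction with
    | mem x hx =>
      obtain ⟨a, ha, rfl⟩ := hx
      exact map_mul φ a b ▸ Ideal.mem_map_of_mem φ (Ideal.mul_mem_mul ha hb)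
    | zero => simp
    | add x x' _ _ h h' => exact add_mul x x' _ ▸ add_mem h h'
    | smul c x _ h => exact smul_mul_assoc c x (φ b) ▸ Submodule.smul_mem _ c h
  | zero => simp
  | add y y' _ _ h h' => exact mul_add x y y' ▸ add_mem (h x hx) (h' x hx)
  | smul c y _ h => exact mul_assoc x c y ▸ h (x * c) (hI.mul_mem_of_left c hx)

theorem map_pow_le {S : Type*} [Ring S] {φ : R →+* S} {I : Ideal R} [I.IsTwoSided]
    [(I.map φ).IsTwoSided] (k : ℕ) : I.map φ ^ k ≤ (I ^ k).map φ := by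
  induction k with
  | zero =>
    rw [Submodule.pow_zero, Submodule.pow_zero, Ideal.one_eq_top, Ideal.one_eq_top, top_le_iff,
      Ideal.eq_top_iff_one]
    exact map_one φ ▸ Ideal.mem_map_of_mem φ Submodule.mem_top
  | succ k ih =>
    rw [Ideal.IsTwoSided.pow_succ, Ideal.IsTwoSided.pow_succ]
    exact (Ideal.mul_mono_right ih).trans (map_mul_map_le _)

end PrimeRadical

section PrimeRadicalOfFractions

variable {A A' B B' : Type*} [Ring A] [Ring A'] [Ring B] [Ring B'] {φ : A →+* B} {π : A →+* A'}
  {D : Submonoid A}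

/-- The left Ore condition for denominators in `D` and numerators in `I`, where the new numerator
`m₁` is also required to lie in `I`. -/
def IsLeftOreOn (D : Submonoid A) (I : Ideal A) : Prop :=
  ∀ c ∈ D, ∀ m ∈ I, ∃ c₁ ∈ D, ∃ m₁ ∈ I, c₁ * m = m₁ * c

namespace HasLeftFractions

theorem isLeftOreOn_comap (h : HasLeftFractions φ D) (hφ : Injective φ) (I : Ideal B)
    [I.IsTwoSided] : IsLeftOreOn D (I.comap φ) := by
  intro c hc m hm
  obtain ⟨c₁, hc₁, m₁, e⟩ := h.exists_map_mul_eq m hc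
  refine ⟨c₁, hc₁, m₁, ?_, hφ (by simpa using e)⟩
  obtain ⟨u, hu⟩ := h.isUnit c hc
  have hm₁ : φ m₁ * φ c ∈ I := e ▸ I.mul_mem_left _ hm
  simpa [← hu] using I.mul_mem_right (↑u⁻¹ : B) hm₁

theorem isPrimeNC_comap (h : HasLeftFractions φ D) [IsNoetherianRing B] {P : Ideal B}
    (hP : P.IsPrimeNC) : (P.comap φ).IsPrimeNC := by
  refine ⟨fun H => hP.1 ?_, fun a ha r => ?_, fun a b hab => ?_⟩
  · rw [Ideal.eq_top_iff_one] at H ⊢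
    rwa [Ideal.mem_comap, map_one] at H
  · rw [Ideal.mem_comap, map_mul]
    exact hP.2.1 _ ha _
  · let J : Ideal B := P.colon (Set.range fun r : A => φ r * φ b)
    have mem_J : ∀ y, y ∈ J ↔ ∀ r, y * (φ r * φ b) ∈ P := fun y => by
      simp [J, Submodule.mem_colon]
    have hJ : J.IsTwoSided := h.isTwoSided_of_stable fun x hx a => (mem_J _).2 fun r => by
      simpa [mul_assoc] using (mem_J x).1 hx (a * r)
    have haJ : φ a ∈ J := (mem_J _).2 fun r => by
      simpa [mul_assoc] using hab r
    exact hP.2.2 (φ a) (φ b) fun q => by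
      simpa using (mem_J _).1 (hJ.mul_mem_of_left q haJ) 1

theorem comap_primeRadical (h : HasLeftFractions φ D) (hφ : Injective φ) [IsNoetherianRing B] :
    (primeRadical B).comap φ = primeRadical A := by
  refine le_antisymm ?_ fun a ha => ?_
  · obtain ⟨k, hk⟩ := isNilpotentIdeal_primeRadical (R := B)
    exact le_primeRadical_of_pow_eq_bot (comap_pow_eq_bot hφ hk)
  · exact mem_primeRadical.2 fun P hP => mem_primeRadical.1 ha _ (h.isPrimeNC_comap hP)

theorem map_primeRadical (h : HasLeftFractions φ D) (hφ : Injective φ) [IsNoetherianRing B] :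
    (primeRadical A).map φ = primeRadical B := by
  rw [← h.comap_primeRadical hφ, h.map_comap]

theorem primeRadical_pow_eq_bot_iff (h : HasLeftFractions φ D) (hφ : Injective φ)
    [IsNoetherianRing B] (k : ℕ) : primeRadical B ^ k = ⊥ ↔ primeRadical A ^ k = ⊥ := by
  refine ⟨fun hk => h.comap_primeRadical hφ ▸ comap_pow_eq_bot hφ hk, fun hk => ?_⟩
  have : ((primeRadical A).map φ).IsTwoSided := h.map_primeRadical hφ ▸ inferInstance
  rw [← h.map_primeRadical hφ, ← le_bot_iff, ← Ideal.map_bot (f := φ), ← hk]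
  exact map_pow_le k

protected theorem isNilpotentIdeal_primeRadical (h : HasLeftFractions φ D) (hφ : Injective φ)
    [IsNoetherianRing B] : IsNilpotentIdeal (primeRadical A) :=
  let ⟨k, hk⟩ := isNilpotentIdeal_primeRadical (R := B)
  ⟨k, (h.primeRadical_pow_eq_bot_iff hφ _).1 hk⟩

theorem exists_quotient (h : HasLeftFractions φ D) (hπ : Surjective π) {χ : B →+* B'}
    (hχ : Surjective χ) (hker : RingHom.ker π = (RingHom.ker χ).comap φ) :
    ∃ ψ : A' →+* B', Injective ψ ∧ ψ.comp π = χ.comp φ ∧ HasLeftFractions ψ (D.map π) := by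
  let ψ : A' →+* B' := π.liftOfSurjective hπ ⟨χ.comp φ, hker.le⟩
  have hcomp : ψ.comp π = χ.comp φ := RingHom.liftOfRightInverse_comp _ _ _ _
  have hψ : ∀ a, ψ (π a) = χ (φ a) := RingHom.congr_fun hcomp
  refine ⟨ψ, (injective_iff_map_eq_zero ψ).2 fun x hx => ?_, hcomp, ?_, fun y => ?_⟩
  · obtain ⟨a, rfl⟩ := hπ x
    rw [← RingHom.mem_ker, hker]
    rwa [hψ] at hx
  · rintro _ ⟨d, hd, rfl⟩
    exact (hψ d).symm ▸ (h.isUnit d hd).map χ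
  · obtain ⟨b, rfl⟩ := hχ y
    obtain ⟨d, hd, a, e⟩ := h.denom b
    exact ⟨π d, ⟨d, hd, rfl⟩, π a, by rw [hψ, hψ, ← e, map_mul]⟩

theorem exists_residue (h : HasLeftFractions φ D) (hφ : Injective φ) [IsNoetherianRing B]
    (hπ : Surjective π) (hker : RingHom.ker π = primeRadical A) :
    ∃ ψ : A' →+* B ⧸ primeRadical B, Injective ψ ∧
      ψ.comp π = (Ideal.Quotient.mk (primeRadical B)).comp φ ∧ HasLeftFractions ψ (D.map π) :=
  h.exists_quotient hπ Ideal.Quotient.mk_surjective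
    (by rw [Ideal.mk_ker, h.comap_primeRadical hφ, hker])

theorem isLeftGoldie_residue (h : HasLeftFractions φ D) (hφ : Injective φ) [IsNoetherianRing B]
    (hπ : Surjective π) (hker : RingHom.ker π = primeRadical A) : IsLeftGoldie A' := by
  obtain ⟨ψ, hψ, -, hfrac⟩ := h.exists_residue hφ hπ hker
  have : IsNoetherianRing (B ⧸ primeRadical B) :=
    isNoetherianRing_of_surjective _ _ _ (Ideal.Quotient.mk_surjective (I := primeRadical B))
  exact hfrac.isLeftGoldie hψ

theorem map_mem_nonZeroDivisors_iff (h : HasLeftFractions φ A⁰) (hφ : Injective φ)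
    [IsArtinianRing B] (hπ : Surjective π) (hker : RingHom.ker π = primeRadical A) {a : A} :
    π a ∈ A'⁰ ↔ a ∈ A⁰ := by
  obtain ⟨ψ, hψ, hcomp, hfrac⟩ := h.exists_residue hφ hπ hker
  have hψπ : ψ (π a) = Ideal.Quotient.mk (primeRadical B) (φ a) := RingHom.congr_fun hcomp a
  refine ⟨fun ha => ?_, fun ha => ?_⟩
  · have hunit := hψπ ▸ hfrac.isUnit_map_of_mem_nonZeroDivisorsRight hψ ha.2
    exact mem_nonZeroDivisors_of_injective hφ <| IsUnit.mem_nonZeroDivisors <|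
      isUnit_of_isUnit_map Ideal.Quotient.mk_surjective (fun x hx =>
        isNilpotentIdeal_primeRadical.isNilpotent_of_mem (Ideal.mk_ker.le hx)) hunit
  · exact mem_nonZeroDivisors_of_injective hψ (hfrac.isUnit _ ⟨a, ha, rfl⟩).mem_nonZeroDivisors

end HasLeftFractions

end PrimeRadicalOfFractions

section Criterion

variable {A : Type u} {A' : Type v} {B : Type*} [Ring A] [Ring A'] [Ring B]
  {φ : A →+* B} {π : A →+* A'} {D : Submonoid A}

theorem HasLeftFractions.isLeftOreSubset (h : HasLeftFractions φ D) (hφ : Injective φ) :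
    IsLeftOreSubset (D : Set A) := by
  refine ⟨D.one_mem, fun _ hs _ ht => D.mul_mem hs ht, fun s hs a => ?_⟩
  obtain ⟨t, ht, b, e⟩ := h.exists_map_mul_eq a hs
  exact ⟨t, ht, b, hφ (by simpa using e)⟩

theorem IsLeftOreOn.exists_mul_eq_mul (hD : IsLeftOreOn D (RingHom.ker π)) (hπ : Surjective π)
    (hs : IsSemiprimeRing A') (hA : IsLeftGoldie A') (himg : D.map π = A'⁰) {s : A} (hsD : s ∈ D)
    (a : A) : ∃ t ∈ D, ∃ b, t * a = b * s := by
  obtain ⟨t', ht', b', e⟩ := hA.exists_mul_eq_mul hs (π a) (himg ▸ Submonoid.mem_map_of_mem π hsD)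
  obtain ⟨t, ht, rfl⟩ := Submonoid.mem_map.1 (himg ▸ ht')
  obtain ⟨b, rfl⟩ := hπ b'
  obtain ⟨c, hc, m, -, hcm⟩ := hD s hsD (t * a - b * s) (by simp [RingHom.mem_ker, e])
  exact ⟨c * t, D.mul_mem hc ht, c * b + m, by rw [add_mul, ← hcm]; noncomm_ring⟩

/- If `c = d + m` with `m ∈ I ^ j` and `c₁ m = m₁ d`, then `(c₁ - m₁) c = c₁ d - m₁ m`, and
`m₁ m ∈ I ^ (j + 1)`. -/
theorem IsLeftOreOn.exists_mul_mem {I : Ideal A} (hD : IsLeftOreOn D I) (hI : IsNilpotentIdeal I)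
    {c d : A} (hd : d ∈ D) (hcd : c - d ∈ I) : ∃ x : A, x * c ∈ D := by
  have happrox : ∀ j : ℕ, ∃ x, ∃ d ∈ D, x * c - d ∈ I ^ (j + 1) := by
    intro j
    induction j with
    | zero => exact ⟨1, d, hd, by rwa [one_mul, zero_add, Submodule.pow_one]⟩
    | succ j ih =>
      obtain ⟨x, d, hd, hm⟩ := ih
      obtain ⟨c₁, hc₁, m₁, hm₁, e⟩ := hD d hd _ (Ideal.pow_le_self j.succ_ne_zero hm)
      refine ⟨(c₁ - m₁) * x, c₁ * d, D.mul_mem hc₁ hd, ?_⟩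
      have key : (c₁ - m₁) * x * c - c₁ * d = -(m₁ * (x * c - d)) := by
        calc (c₁ - m₁) * x * c - c₁ * d
            = c₁ * (x * c - d) - m₁ * d - m₁ * (x * c - d) := by noncomm_ring
          _ = _ := by rw [e, sub_self, zero_sub]
      rw [key, Submodule.pow_succ' _ j.succ_ne_zero]
      exact neg_mem (Ideal.mul_mem_mul hm₁ hm)
  obtain ⟨k, hk⟩ := hI
  obtain ⟨x, d, hd, hx⟩ := happrox k
  rw [hk, Submodule.mem_bot, sub_eq_zero] at hx
  exact ⟨x, hx ▸ hd⟩

theorem HasLeftFractions.of_forall_exists_mul_mem {D' : Submonoid A} (h : HasLeftFractions φ D')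
    (hle : D ≤ D') (hD : ∀ c ∈ D', ∃ x, x * c ∈ D) : HasLeftFractions φ D := by
  refine ⟨fun d hd => h.isUnit d (hle hd), fun b => ?_⟩
  obtain ⟨c, hc, r, e⟩ := h.denom b
  obtain ⟨x, hx⟩ := hD c hc
  exact ⟨x * c, hx, x * r, by rw [map_mul, mul_assoc, e, map_mul]⟩

theorem HasLeftFractions.of_isLeftOreOn (h : HasLeftFractions φ A⁰) (hφ : Injective φ)
    [IsArtinianRing B] (hπ : Surjective π) (hker : RingHom.ker π = primeRadical A)
    (himg : D.map π = A'⁰) (hD : IsLeftOreOn D (primeRadical A)) : HasLeftFractions φ D := by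
  have hreg : ∀ {a}, π a ∈ A'⁰ ↔ a ∈ A⁰ := h.map_mem_nonZeroDivisors_iff hφ hπ hker
  refine h.of_forall_exists_mul_mem
    (fun d hd => hreg.1 (himg ▸ Submonoid.mem_map_of_mem π hd)) fun c hc => ?_
  obtain ⟨d, hd, hdc⟩ := Submonoid.mem_map.1 (himg ▸ hreg.2 hc)
  exact hD.exists_mul_mem (h.isNilpotentIdeal_primeRadical hφ) hd
    (by rw [← hker, RingHom.mem_ker, map_sub, hdc, sub_self])

theorem isArtinianRing_of_isSemisimpleRing_quotient_primeRadical [IsNoetherianRing B]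
    [IsSemisimpleRing (B ⧸ primeRadical B)] : IsArtinianRing B := by
  have hle : primeRadical B ≤ Ring.jacobson B := le_jacobson_of_forall_isNilpotent fun _ hx =>
    isNilpotentIdeal_primeRadical.isNilpotent_of_mem hx
  have hge : Ring.jacobson B ≤ primeRadical B :=
    Ring.jacobson_le_of_eq_bot (IsSemisimpleRing.jacobson_eq_bot _)
  obtain ⟨k, hk⟩ := isNilpotentIdeal_primeRadical (R := B)
  have : IsSemiprimaryRing B := (isSemiprimaryRing_iff B).2
    ⟨RingHom.isSemisimpleRing_of_surjective (Ideal.Quotient.factor hle)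
      (Ideal.Quotient.factor_surjective hle), k + 1, by rw [hge.antisymm hle, hk]; rfl⟩
  exact IsSemiprimaryRing.isNoetherian_iff_isArtinian.1 ‹IsNoetherianRing B›

theorem HasLeftFractions.isArtinianRing (h : HasLeftFractions φ D) (hφ : Injective φ)
    (hπ : Surjective π) (hker : RingHom.ker π = primeRadical A) (hA : IsLeftGoldie A')
    (himg : D.map π = A'⁰) (hacc : ACCClosedLeftIdeals (D : Set A)) : IsArtinianRing B := by
  have := (h.isNoetherianRing_iff hφ).2 hacc
  obtain ⟨ψ, hψ, -, hfrac⟩ := h.exists_residue hφ hπ hker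
  have : IsSemisimpleRing (B ⧸ primeRadical B) :=
    (himg ▸ hfrac).isSemisimpleRing hψ (isSemiprimeRing_of_ker_eq hπ hker) hA
  exact isArtinianRing_of_isSemisimpleRing_quotient_primeRadical

theorem IsLeftOreSubset.exists_hasLeftFractions (hore : IsLeftOreSubset (D : Set A))
    (hD : D ≤ A⁰) :
    ∃ (B : Type u) (_ : Ring B) (φ : A →+* B), Injective φ ∧ HasLeftFractions φ D := by
  obtain ⟨i⟩ : Nonempty (OreLocalization.OreSet D) := by
    refine OreLocalization.nonempty_oreSet_iff.2 ⟨fun r₁ r₂ s hrs => ⟨1, ?_⟩, fun r s => ?_⟩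
    · rw [sub_eq_zero.1 ((hD s.2).2 (r₁ - r₂) (by rw [sub_mul, hrs, sub_self]))]
    · obtain ⟨t, ht, b, e⟩ := hore.2.2 s s.2 r
      exact ⟨b, ⟨t, ht⟩, e⟩
  refine ⟨OreLocalization D A, inferInstance, OreLocalization.numeratorRingHom, ?_, ?_, ?_⟩
  · exact OreLocalization.numeratorHom_inj fun d hd x hx => (hD hd).1 x hx
  · exact fun d hd => OreLocalization.numerator_isUnit (⟨d, hd⟩ : D)
  · intro b
    induction b using OreLocalization.ind with
    | _ r s => exact ⟨s, s.2, r, OreLocalization.mul_cancel⟩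

theorem hasArtinianLeftQuot_of_isLeftOreOn (hπ : Surjective π)
    (hker : RingHom.ker π = primeRadical A) (hA : IsLeftGoldie A') (hreg : D ≤ A⁰)
    (himg : D.map π = A'⁰) (hD : IsLeftOreOn D (primeRadical A))
    (hacc : ACCClosedLeftIdeals (D : Set A)) :
    HasArtinianLeftQuot A := by
  have hore : IsLeftOreSubset (D : Set A) :=
    ⟨D.one_mem, fun _ hs _ ht => D.mul_mem hs ht, fun _ hs a =>
      (hker ▸ hD).exists_mul_eq_mul hπ (isSemiprimeRing_of_ker_eq hπ hker) hA himg hs a⟩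
  obtain ⟨B, _, φ, hφ, h⟩ := hore.exists_hasLeftFractions hreg
  have hart := h.isArtinianRing hφ hπ hker hA himg hacc
  refine ⟨⟨B, φ, HasLeftFractions.isLeftQuotRing ⟨fun c hc => ?_, fun b => ?_⟩ hφ⟩, hart⟩
  · exact h.isUnit_map_of_mem_nonZeroDivisorsRight hφ hc.2
  · obtain ⟨d, hd, a, e⟩ := h.denom b
    exact ⟨d, hreg hd, a, e⟩

theorem IsLeftQuotRing.exists_leftQuotData {ψ : A' →+* B} (hψ : IsLeftQuotRing ψ) :
    ∃ (e : LeftQuotData A') (θ : B ≃+* e.Q), (θ : B →+* e.Q).comp ψ = e.φ := by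
  choose c r hc hcr using hψ.denom
  have hinj : Injective fun b => (c b, r b) := by
    intro b b' hb
    obtain ⟨hcb, hrb⟩ := Prod.mk.inj hb
    refine (hψ.isUnit _ (hc b)).mul_left_cancel ?_
    rw [hcr, hrb, hcb, hcr]
  have : Small.{v} B := small_of_injective hinj
  let θ : B ≃+* Shrink.{v} B := (Shrink.ringEquiv B).symm
  refine ⟨⟨Shrink.{v} B, (θ : B →+* Shrink.{v} B).comp ψ, θ.injective.comp hψ.inj,
    fun a ha => (hψ.isUnit a ha).map (θ : B →+* Shrink.{v} B), fun q => ?_⟩, θ, rfl⟩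
  obtain ⟨b, rfl⟩ := θ.surjective q
  exact ⟨c b, r b, hc b, by simp [← hcr, map_mul]⟩

theorem HasLeftFractions.exists_leftQuotData_residue [IsNoetherianRing B]
    (h : HasLeftFractions φ D) (hφ : Injective φ) (hπ : Surjective π)
    (hker : RingHom.ker π = primeRadical A) (himg : D.map π = A'⁰) :
    ∃ (e : LeftQuotData A') (θ : B →+* e.Q),
      Surjective θ ∧ RingHom.ker θ = primeRadical B ∧ θ.comp φ = e.φ.comp π := by
  obtain ⟨ψ, hψ, hcomp, hfrac⟩ := h.exists_residue hφ hπ hker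
  obtain ⟨e, θ, hθ⟩ := ((himg ▸ hfrac).isLeftQuotRing hψ).exists_leftQuotData
  refine ⟨e, (θ : _ →+* e.Q).comp (Ideal.Quotient.mk (primeRadical B)),
    θ.surjective.comp Ideal.Quotient.mk_surjective, ?_, ?_⟩
  · ext q
    simp [RingHom.mem_ker, Ideal.Quotient.eq_zero_iff_mem]
  · rw [RingHom.comp_assoc, ← hcomp, ← RingHom.comp_assoc, hθ]

end Criterion

theorem HasArtinianLeftQuot.isNilpotentIdeal_primeRadical {R : Type u} [Ring R]
    (h : HasArtinianLeftQuot R) : IsNilpotentIdeal (primeRadical R) :=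
  let ⟨d, _⟩ := h
  d.quot.hasLeftFractions.isNilpotentIdeal_primeRadical d.quot.inj

theorem left_artinian_left_quotient_ring_criterion_robson_weak_submonoid_general
    {R : Type u} [Ring R] (Rbar : Type v) [Ring Rbar] (π : R →+* Rbar)
    (hπsurj : Surjective π) (hπker : RingHom.ker π = primeRadical R) :
    (HasArtinianLeftQuot R ↔
      IsLeftGoldie Rbar ∧ ∃ D : Submonoid R, (D : Set R) ⊆ regSet R ∧
        π '' (D : Set R) = regSet Rbar ∧ IsLeftOreOn D (primeRadical R) ∧
        ACCClosedLeftIdeals (D : Set R)) ∧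
    (HasArtinianLeftQuot R →
      ∀ D : Submonoid R, π '' (D : Set R) = regSet Rbar → IsLeftOreOn D (primeRadical R) →
        IsLeftOreSubset (D : Set R) ∧
        ∀ d : LeftQuotData R, IsArtinianRing d.Q →
          (∀ q : d.Q, ∃ c ∈ D, ∃ r : R, d.φ c * q = d.φ r) ∧
          (primeRadical d.Q : Set d.Q) =
            {q : d.Q | ∃ c ∈ D, ∃ a ∈ primeRadical R, d.φ c * q = d.φ a} ∧
          IsNilpotentIdeal (primeRadical d.Q) ∧
          (∀ k : ℕ, primeRadical d.Q ^ k = ⊥ ↔ primeRadical R ^ k = ⊥) ∧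
          ∃ (e : LeftQuotData Rbar) (θ : d.Q →+* e.Q),
            Surjective θ ∧ RingHom.ker θ = primeRadical d.Q ∧ θ.comp d.φ = e.φ.comp π) := by
  refine ⟨⟨fun ⟨d, _⟩ => ?_, fun ⟨hA, D, hreg, himg, hD, hacc⟩ => ?_⟩, fun ⟨d₀, _⟩ D himg hD => ?_⟩
  · have h := d.quot.hasLeftFractions
    have hreg : π ⁻¹' regSet Rbar = regSet R :=
      Set.ext fun _ => h.map_mem_nonZeroDivisors_iff d.quot.inj hπsurj hπker
    exact ⟨h.isLeftGoldie_residue d.quot.inj hπsurj hπker, R⁰, subset_rfl,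
      (congrArg (π '' ·) hreg).symm.trans (Set.image_preimage_eq _ hπsurj),
      h.comap_primeRadical d.quot.inj ▸ h.isLeftOreOn_comap d.quot.inj _,
      (h.isNoetherianRing_iff d.quot.inj).1 inferInstance⟩
  · exact hasArtinianLeftQuot_of_isLeftOreOn hπsurj hπker hA hreg (SetLike.coe_injective himg) hD
      hacc
  · have himg' : D.map π = Rbar⁰ := SetLike.coe_injective himg
    have h (d : LeftQuotData R) [IsArtinianRing d.Q] : HasLeftFractions d.φ D :=
      d.quot.hasLeftFractions.of_isLeftOreOn d.quot.inj hπsurj hπker himg' hD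
    refine ⟨(h d₀).isLeftOreSubset d₀.quot.inj, fun d _ => ⟨(h d).denom, ?_,
      isNilpotentIdeal_primeRadical, (h d).primeRadical_pow_eq_bot_iff d.quot.inj,
      (h d).exists_leftQuotData_residue d.quot.inj hπsurj hπker himg'⟩⟩
    ext q
    rw [SetLike.mem_coe, ← (h d).map_primeRadical d.quot.inj]
    exact (h d).mem_map_iff

/-- **Corollary (`a10Sep12`).** Let `R` be a ring, `n` its prime radical, `R̄ = R/n`
(realized by a surjective `π` with kernel `n`).  TFAE:
(1) `R` has a left Artinian left quotient ring;
(2) (a) `R̄` is a left Goldie ring, (b) `n` is a nilpotent ideal, (c) there is a submonoid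
`C''` of `C` whose image in `R̄` is `C̄`, (d) for all `c ∈ C''` and `m ∈ n` there are
`c₁ ∈ C''`, `m₁ ∈ n` with `c₁ m = m₁ c`, and (e) `R` satisfies the ACC on `C''`-closed left
ideals.  Moreover, if these conditions hold then (for any such `C''`): `C''` is a left Ore
set in `R`, `C''⁻¹R = Q`, `C''⁻¹n` is the prime radical of `Q` and is nilpotent of
nilpotency degree `ν`, and the map `Q/C''⁻¹n → Q̄`, `c⁻¹r ↦ c̄⁻¹r̄`, is a ring isomorphism
(encoded by a surjective `θ : Q → Q̄` with kernel `C''⁻¹n` and `θ ∘ φ = ψ ∘ π`). -/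
theorem left_artinian_left_quotient_ring_criterion_robson_weak_submonoid
    {R : Type u} [Ring R] (Rbar : Type v) [Ring Rbar] (π : R →+* Rbar)
    (hπsurj : Function.Surjective π) (hπker : RingHom.ker π = primeRadical R) :
    (HasArtinianLeftQuot R ↔
      (IsLeftGoldie Rbar ∧
        IsNilpotentIdeal (primeRadical R) ∧
        (∃ C'' : Submonoid R, (↑C'' : Set R) ⊆ regSet R ∧
          π '' (↑C'' : Set R) = {x : Rbar | IsRegElem x} ∧
          (∀ c ∈ C'', ∀ m ∈ primeRadical R,
            ∃ c₁ ∈ C'', ∃ m₁ ∈ primeRadical R, c₁ * m = m₁ * c) ∧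
          (∀ f : ℕ → Ideal R, (∀ i, IsSClosedLeftIdeal (↑C'' : Set R) (f i)) →
            (∀ i j, i ≤ j → f i ≤ f j) → ∃ N, ∀ k, N ≤ k → f k = f N)))) ∧
    (HasArtinianLeftQuot R →
      ∀ C'' : Submonoid R, (↑C'' : Set R) ⊆ regSet R →
        π '' (↑C'' : Set R) = {x : Rbar | IsRegElem x} →
        (∀ c ∈ C'', ∀ m ∈ primeRadical R,
          ∃ c₁ ∈ C'', ∃ m₁ ∈ primeRadical R, c₁ * m = m₁ * c) →
        (∀ f : ℕ → Ideal R, (∀ i, IsSClosedLeftIdeal (↑C'' : Set R) (f i)) →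
          (∀ i j, i ≤ j → f i ≤ f j) → ∃ N, ∀ k, N ≤ k → f k = f N) →
        IsLeftOreSubset (↑C'' : Set R) ∧
        ∀ d : LeftQuotData R, IsArtinianRing d.Q →
          (∀ q : d.Q, ∃ c ∈ C'', ∃ r : R, d.φ c * q = d.φ r) ∧
          ((↑(primeRadical d.Q) : Set d.Q) =
            {q : d.Q | ∃ c ∈ C'', ∃ a ∈ primeRadical R, d.φ c * q = d.φ a}) ∧
          IsNilpotentIdeal (primeRadical d.Q) ∧
          (∀ k : ℕ, primeRadical d.Q ^ k = ⊥ ↔ primeRadical R ^ k = ⊥) ∧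
          ∃ (e : LeftQuotData Rbar) (θ : d.Q →+* e.Q),
            Function.Surjective θ ∧ RingHom.ker θ = primeRadical d.Q ∧
              θ.comp d.φ = e.φ.comp π) := by
  obtain ⟨h, h'⟩ := left_artinian_left_quotient_ring_criterion_robson_weak_submonoid_general
    Rbar π hπsurj hπker
  exact ⟨⟨fun hQ => ⟨(h.1 hQ).1, hQ.isNilpotentIdeal_primeRadical, (h.1 hQ).2⟩,
    fun ⟨hA, _, hC⟩ => h.2 ⟨hA, hC⟩⟩, fun hQ C'' _ himg hore _ => h' hQ C'' himg hore⟩
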